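/- Let Σ be a rational fan and f ∈ PL(Σ). Then the class [e^f] equals 1 in the quotient ring PE(Σ)/⟨e^ℓ − 1 : ℓ ∈ L(Σ)⟩ if and only if f ∈ L(Σ), i.e., f is the restriction to |Σ| of an integral linear function m ∈ M. -/

import Mathlib

open scoped BigOperators Pointwise

namespace EhrhartFormalization

/-- The ambient real vector space `N_ℝ ≅ ℝⁿ`, with lattice `N = ℤⁿ`. -/
abbrev V (n : ℕ) : Type := Fin n → ℝ

/-- The real point associated to a lattice point. -/
def toR {n : ℕ} (u : Fin n → ℤ) : V n := fun i => (u i : ℝ)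

/-- The pairing of an integral linear functional `m ∈ M` with a point of `N_ℝ`. -/
def pairR {n : ℕ} (m : Fin n → ℤ) (v : V n) : ℝ := ∑ i, (m i : ℝ) * v i

/-- The pairing of an integral linear functional with a lattice point. -/
def pairZ {n : ℕ} (m u : Fin n → ℤ) : ℤ := ∑ i, m i * u i

/-- A rational cone: a finite intersection of closed rational halfspaces. -/
def IsRationalCone {n : ℕ} (σ : Set (V n)) : Prop :=
  ∃ s : Finset (Fin n → ℤ), σ = {v | ∀ m ∈ s, 0 ≤ pairR m v}

/-- `τ` is a face of `σ`: it is cut out by an integral linear functional that is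
nonpositive on `σ`. -/
def IsFaceOf {n : ℕ} (τ σ : Set (V n)) : Prop :=
  ∃ m : Fin n → ℤ, (∀ v ∈ σ, pairR m v ≤ 0) ∧ τ = {v ∈ σ | pairR m v = 0}

/-- A rational fan in `N_ℝ`. -/
structure RationalFan (n : ℕ) where
  cones : Set (Set (V n))
  finite : cones.Finite
  rational : ∀ σ ∈ cones, IsRationalCone σ
  face_mem : ∀ σ ∈ cones, ∀ τ : Set (V n), IsFaceOf τ σ → τ ∈ cones
  inter_face : ∀ σ₁ ∈ cones, ∀ σ₂ ∈ cones, IsFaceOf (σ₁ ∩ σ₂) σ₁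

/-- The support of a fan: the union of its cones. -/
def RationalFan.support {n : ℕ} (S : RationalFan n) : Set (V n) := ⋃ σ ∈ S.cones, σ

/-- The dimension of a cone. -/
noncomputable def dimCone {n : ℕ} (σ : Set (V n)) : ℕ :=
  Module.finrank ℝ (Submodule.span ℝ σ)

/-- The set `Σ(k)` of `k`-dimensional cones of a fan. -/
def RationalFan.conesDim {n : ℕ} (S : RationalFan n) (k : ℕ) : Set (Set (V n)) :=
  {σ | σ ∈ S.cones ∧ dimCone σ = k}

/-- The rays (`1`-dimensional cones) of a fan. -/
def RationalFan.rays {n : ℕ} (S : RationalFan n) : Set (Set (V n)) :=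
  S.conesDim 1

/-- The dimension of a fan: the largest dimension of any of its cones. -/
noncomputable def RationalFan.dim {n : ℕ} (S : RationalFan n) : ℕ :=
  sSup (dimCone '' S.cones)

/-- `u` is the primitive ray generator of the ray `ρ`: the lattice point of `ρ`
generating `ρ ∩ N` as a monoid. -/
def IsRayGenOf {n : ℕ} (ρ : Set (V n)) (u : Fin n → ℤ) : Prop :=
  toR u ∈ ρ ∧ u ≠ 0 ∧ ∀ w : Fin n → ℤ, toR w ∈ ρ → ∃ c : ℕ, w = c • u

open Classical in
/-- The primitive generator of a ray (junk value `0` if none exists). -/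
noncomputable def rayGen {n : ℕ} (ρ : Set (V n)) : Fin n → ℤ :=
  if h : ∃ u, IsRayGenOf ρ u then h.choose else 0

/-- A unimodular cone: generated by part of a `ℤ`-basis of the lattice. -/
def IsUnimodularCone {n : ℕ} (σ : Set (V n)) : Prop :=
  ∃ (b : Module.Basis (Fin n) ℤ (Fin n → ℤ)) (k : ℕ), k ≤ n ∧
    σ = {v | ∃ c : Fin n → ℝ, (∀ i, 0 ≤ c i) ∧ (∀ i : Fin n, k ≤ (i : ℕ) → c i = 0) ∧
          v = ∑ i, c i • toR (b i)}

/-- A unimodular fan: a pointed fan all of whose cones are unimodular. -/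
def IsUnimodular {n : ℕ} (S : RationalFan n) : Prop :=
  ({0} : Set (V n)) ∈ S.cones ∧ ∀ σ ∈ S.cones, IsUnimodularCone σ

/-- A complete fan: its support is all of `N_ℝ`. -/
def IsComplete {n : ℕ} (S : RationalFan n) : Prop := S.support = Set.univ

/-- For a unimodular fan, `PL(Σ) = ℤ^{Σ(1)}`; this is the element of `PL(Σ)`
obtained by restricting an integral linear function `m ∈ M`, recorded by its
values at the primitive ray generators. -/
noncomputable def linPL {n : ℕ} (S : RationalFan n) (m : Fin n → ℤ) : ↥S.rays → ℤ :=
  fun ρ => pairZ m (rayGen (ρ : Set (V n)))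

open Classical in
/-- The Courant function of a ray: value `1` at `u_ρ₀` and `0` at other ray generators. -/
noncomputable def courant {n : ℕ} (S : RationalFan n) (ρ₀ : ↥S.rays) : ↥S.rays → ℤ :=
  fun ρ => if ρ = ρ₀ then 1 else 0

/-- The neighborhood `Σ^{(σ)}` of a cone: all cones contained in a cone containing `σ`. -/
def RationalFan.nbhd {n : ℕ} (S : RationalFan n) (σ : Set (V n)) : Set (Set (V n)) :=
  {τ | τ ∈ S.cones ∧ ∃ σ' ∈ S.cones, σ ⊆ σ' ∧ τ ⊆ σ'}

/-- `T` is the star fan of `S` at the cone `σ`, realized via the lattice-compatible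
surjection `π` whose kernel is the span of `σ`. -/
def IsStarMap {n m : ℕ} (S : RationalFan n) (σ : Set (V n)) (π : V n →ₗ[ℝ] V m)
    (T : RationalFan m) : Prop :=
  Function.Surjective π ∧
  (∀ u : Fin n → ℤ, ∃ w : Fin m → ℤ, π (toR u) = toR w) ∧
  (∀ w : Fin m → ℤ, ∃ u : Fin n → ℤ, π (toR u) = toR w) ∧
  LinearMap.ker π = Submodule.span ℝ σ ∧
  T.cones = (Set.image π) '' S.nbhd σ

/-- The recursive system of conditions defining Ehrhart fans: `χ` descends to
`uPL(Σ) = PL(Σ)/L(Σ)`, is normalized by `χ(0) = 1`, and for every ray `ρ` there is a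
star fan (with its own Ehrhart function `χT`, recursively) along which the Ehrhart
recursion `χ([f]) = χ([f - δ_ρ]) + χ_{Σ^ρ}([f]^ρ)` holds, where `[f]^ρ` is computed
by subtracting an integral linear function `m₀` agreeing with `f` on `ρ` and pushing
down to the star fan. -/
def EhrhartRec : (n : ℕ) → (S : RationalFan n) → ((↥S.rays → ℤ) → ℤ) → Prop
  | 0, S, χ =>
      (∀ (f : ↥S.rays → ℤ) (m : Fin 0 → ℤ), χ (f + linPL S m) = χ f) ∧ χ 0 = 1
  | (n + 1), S, χ =>
      (∀ (f : ↥S.rays → ℤ) (m : Fin (n + 1) → ℤ), χ (f + linPL S m) = χ f) ∧ χ 0 = 1 ∧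
      ∀ ρ : ↥S.rays, ∃ (π : V (n + 1) →ₗ[ℝ] V n) (T : RationalFan n)
          (χT : (↥T.rays → ℤ) → ℤ),
        IsStarMap S (ρ : Set (V (n + 1))) π T ∧ IsUnimodular T ∧ EhrhartRec n T χT ∧
        ∀ f : ↥S.rays → ℤ, ∃ (m₀ : Fin (n + 1) → ℤ) (g : ↥T.rays → ℤ),
          pairZ m₀ (rayGen (ρ : Set (V (n + 1)))) = f ρ ∧
          (∀ (ρ' : ↥S.rays) (ρT : ↥T.rays),
              π '' (ρ' : Set (V (n + 1))) = (ρT : Set (V n)) →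
              g ρT = f ρ' - pairZ m₀ (rayGen (ρ' : Set (V (n + 1))))) ∧
          χ f = χ (f - courant S ρ) + χT g

/-- A unimodular fan is Ehrhart if it admits an Ehrhart function satisfying the
Ehrhart recursion (together, recursively, with all of its star fans). -/
def IsEhrhart {n : ℕ} (S : RationalFan n) : Prop :=
  IsUnimodular S ∧ ∃ χ : (↥S.rays → ℤ) → ℤ, EhrhartRec n S χ

/-- An integral piecewise-linear function on a fan (recorded as a function on all of
`N_ℝ`, constrained on each cone of the fan). -/
def IsPLFun {n : ℕ} (S : RationalFan n) (φ : V n → ℝ) : Prop :=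
  ∀ σ ∈ S.cones, ∃ m : Fin n → ℤ, ∀ v ∈ σ, φ v = pairR m v
/-- An integral piecewise-linear function on `Σ`, viewed as a function on the
support `|Σ|`. -/
def IsPLSub {n : ℕ} (S : RationalFan n) (f : ↥S.support → ℝ) : Prop :=
  ∀ σ ∈ S.cones, ∃ m : Fin n → ℤ,
    ∀ v : ↥S.support, (v : V n) ∈ σ → f v = pairR m (v : V n)

/-- An integral linear function on `|Σ|`: the restriction of some `m ∈ M`. -/
def IsLinSub {n : ℕ} (S : RationalFan n) (f : ↥S.support → ℝ) : Prop :=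
  ∃ m : Fin n → ℤ, ∀ v : ↥S.support, f v = pairR m (v : V n)

/-- The ring `PE(Σ)` of integral piecewise-exponential functions on `Σ`: the subring of
`Fun(|Σ|, ℝ)` generated by the functions `e^f` for `f ∈ PL(Σ)`. -/
def PEring {n : ℕ} (S : RationalFan n) : Subring (↥S.support → ℝ) :=
  Subring.closure {F | ∃ f : ↥S.support → ℝ, IsPLSub S f ∧ F = fun v => Real.exp (f v)}

/-- The ideal `⟨e^ℓ - 1 : ℓ ∈ L(Σ)⟩` of `PE(Σ)`. -/
def linIdeal {n : ℕ} (S : RationalFan n) : Ideal ↥(PEring S) :=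
  Ideal.span {x | ∃ l : ↥S.support → ℝ, IsLinSub S l ∧
    (x : ↥S.support → ℝ) = (fun v => Real.exp (l v)) - 1}

theorem pairR_smul {n : ℕ} (m : Fin n → ℤ) (t : ℝ) (v : V n) :
    pairR m (t • v) = t * pairR m v := by
  simp only [pairR, Finset.mul_sum, Pi.smul_apply, smul_eq_mul]
  exact Finset.sum_congr rfl fun i _ => by ring

theorem cone_smul {n : ℕ} (S : RationalFan n) {σ : Set (V n)} (h : σ ∈ S.cones)
    {v : V n} (hv : v ∈ σ) (t : ℝ) : |t| • v ∈ σ := by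
  obtain ⟨s, rfl⟩ := S.rational σ h
  intro m hm
  rw [pairR_smul]
  exact mul_nonneg (abs_nonneg t) (hv m hm)

/-- The ray through `v`, parametrized by `|t|`. -/
def curve {n : ℕ} (S : RationalFan n) (v : ↥S.support) (t : ℝ) : ↥S.support :=
  ⟨|t| • (v : V n), by
    obtain ⟨v, hv⟩ := v
    simp only [RationalFan.support, Set.mem_iUnion] at hv ⊢
    obtain ⟨σ, h, hv⟩ := hv
    exact ⟨σ, h, cone_smul S h hv t⟩⟩

theorem pl_curve {n : ℕ} (S : RationalFan n) (f : ↥S.support → ℝ) (hf : IsPLSub S f)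
    (v : ↥S.support) (t : ℝ) : f (curve S v t) = |t| * f v := by
  have hv := v.2
  simp only [RationalFan.support, Set.mem_iUnion] at hv
  obtain ⟨σ, h, hv⟩ := hv
  obtain ⟨m, hm⟩ := hf σ h
  rw [hm v hv, hm (curve S v t) (cone_smul S h hv t)]
  exact pairR_smul _ _ _

theorem exp_deriv {n : ℕ} (S : RationalFan n) (f : ↥S.support → ℝ) (hf : IsPLSub S f)
    (v : ↥S.support) :
    HasDerivWithinAt (fun t => Real.exp (f (curve S v t))) (f v) (Set.Ici 0) 0 := by
  have h1 : HasDerivAt (fun t : ℝ => Real.exp (t * f v)) (f v) 0 := by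
    have := ((hasDerivAt_id (0 : ℝ)).mul_const (f v)).exp
    simpa using this
  refine h1.hasDerivWithinAt.congr (fun t ht => ?_) ?_
  · rw [pl_curve S f hf, abs_of_nonneg ht]
  · rw [pl_curve S f hf]; simp

theorem pe_deriv {n : ℕ} (S : RationalFan n) (F : ↥S.support → ℝ) (hF : F ∈ PEring S) :
    ∃ k : ℤ, ∀ v, F (curve S v 0) = k ∧
      ∃ d, HasDerivWithinAt (fun t => F (curve S v t)) d (Set.Ici 0) 0 := by
  unfold PEring at hF
  induction hF using Subring.closure_induction with
  | mem x hx =>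
    obtain ⟨f, hf, rfl⟩ := hx
    exact ⟨1, fun v => ⟨by simp [pl_curve S f hf], _, exp_deriv S f hf v⟩⟩
  | zero => exact ⟨0, fun v => ⟨by simp, 0, hasDerivWithinAt_const _ _ _⟩⟩
  | one => exact ⟨1, fun v => ⟨by simp, 0, hasDerivWithinAt_const _ _ _⟩⟩
  | add x y _ _ hx hy =>
    obtain ⟨k, hk⟩ := hx
    obtain ⟨l, hl⟩ := hy
    refine ⟨k + l, fun v => ?_⟩
    obtain ⟨a, d, hd⟩ := hk v
    obtain ⟨b, e, he⟩ := hl v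
    exact ⟨by simp [a, b], _, hd.add he⟩
  | neg x _ hx =>
    obtain ⟨k, hk⟩ := hx
    refine ⟨-k, fun v => ?_⟩
    obtain ⟨a, d, hd⟩ := hk v
    exact ⟨by simp [a], _, hd.neg⟩
  | mul x y _ _ hx hy =>
    obtain ⟨k, hk⟩ := hx
    obtain ⟨l, hl⟩ := hy
    refine ⟨k * l, fun v => ?_⟩
    obtain ⟨a, d, hd⟩ := hk v
    obtain ⟨b, e, he⟩ := hl v
    exact ⟨by simp [a, b], _, hd.mul he⟩

theorem IsLinSub.pl {n : ℕ} {S : RationalFan n} {l : ↥S.support → ℝ} (h : IsLinSub S l) :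
    IsPLSub S l := by
  obtain ⟨m, hm⟩ := h
  exact fun σ _ => ⟨m, fun v _ => hm v⟩

theorem ideal_deriv {n : ℕ} (S : RationalFan n) (x : ↥(PEring S)) (hx : x ∈ linIdeal S) :
    ∃ m : Fin n → ℤ, ∀ v, (x : ↥S.support → ℝ) (curve S v 0) = 0 ∧
      HasDerivWithinAt (fun t => (x : ↥S.support → ℝ) (curve S v t)) (pairR m (v : V n))
        (Set.Ici 0) 0 := by
  unfold linIdeal at hx
  induction hx using Submodule.span_induction with
  | mem x hx =>
    obtain ⟨l, hl, hx⟩ := hx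
    have hp := hl.pl
    obtain ⟨m, hm⟩ := hl
    refine ⟨m, fun v => ?_⟩
    rw [hx, ← hm v]
    exact ⟨by simp [pl_curve S l hp], (exp_deriv S l hp v).sub_const 1⟩
  | zero =>
    refine ⟨0, fun v => ⟨by simp, ?_⟩⟩
    have : pairR (0 : Fin n → ℤ) (v : V n) = 0 := by simp [pairR]
    rw [this]
    exact hasDerivWithinAt_const _ _ _
  | add x y _ _ hx hy =>
    obtain ⟨k, hk⟩ := hx
    obtain ⟨l, hl⟩ := hy
    refine ⟨k + l, fun v => ?_⟩
    obtain ⟨a, hd⟩ := hk v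
    obtain ⟨b, he⟩ := hl v
    refine ⟨by simp [a, b], ?_⟩
    have : pairR (k + l) (v : V n) = pairR k v + pairR l v := by
      simp [pairR, add_mul, Finset.sum_add_distrib]
    rw [this]
    exact hd.add he
  | smul p x _ hx =>
    obtain ⟨m, hm⟩ := hx
    obtain ⟨k, hk⟩ := pe_deriv S p p.2
    refine ⟨k • m, fun v => ?_⟩
    obtain ⟨a, hd⟩ := hm v
    obtain ⟨b, e, he⟩ := hk v
    refine ⟨by simp [a], ?_⟩
    have h := he.mul hd
    have : pairR (k • m) (v : V n) = e * (x : ↥S.support → ℝ) (curve S v 0)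
        + (p : ↥S.support → ℝ) (curve S v 0) * pairR m v := by
      rw [a, b]
      simp [pairR, Finset.mul_sum, mul_assoc]
    rw [this]
    exact h

/-- For `f ∈ PL(Σ)`, the class `[e^f]` equals `1` in
`uPE(Σ) = PE(Σ)/⟨e^ℓ - 1 : ℓ ∈ L(Σ)⟩` if and only if `f ∈ L(Σ)`. -/
theorem exp_class_eq_one_iff_linear {n : ℕ} (S : RationalFan n)
    (f : ↥S.support → ℝ) (hf : IsPLSub S f) :
    Ideal.Quotient.mk (linIdeal S)
        (⟨fun v => Real.exp (f v), Subring.subset_closure ⟨f, hf, rfl⟩⟩ : ↥(PEring S))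
      = 1 ↔ IsLinSub S f := by
  rw [← (Ideal.Quotient.mk (linIdeal S)).map_one, Ideal.Quotient.eq]
  constructor
  · intro h
    obtain ⟨m, hm⟩ := ideal_deriv S _ h
    refine ⟨m, fun v => ?_⟩
    have h1 := (hm v).2
    have h2 := (exp_deriv S f hf v).sub_const 1
    exact (uniqueDiffOn_Ici (0 : ℝ) 0 Set.self_mem_Ici).eq_deriv _ h2 h1
  · intro h
    exact Ideal.subset_span ⟨f, h, rfl⟩

end EhrhartFormalization
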